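/- arXiv:2106.03676 — 4 statements merged into one kernel-verified Lean document; each statement's English description precedes it below -/
import Mathlib

section
/- Let k be a field, n and D positive integers, and A an n-by-D family of vectors a_1, ..., a_n in ℕ^D. Let φ : k[x_1, ..., x_n] → k[t_1, ..., t_D] be the k-algebra homomorphism determined by φ(x_i) = t^{a_i}. Then the kernel of φ, i.e. the toric ideal I_A, is spanned as a k-vector space by the set of binomials { x^u − x^v : u, v ∈ ℕ^n with Σ_i u_i a_i = Σ_i v_i a_i }. -/
open MvPolynomial

/-!
Monomials with the same image under `φ` are congruent modulo the span of the binomials, so the class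
of a monomial depends only on its image. The images are again monomials, and distinct ones are
linearly independent, so `φ p = 0` forces the coefficients of `p` to sum to zero over each fibre of
`φ` on monomials; hence the class of `p` vanishes.
-/

section LinearAlgebra

variable {R M N ι κ : Type*} [Ring R] [AddCommGroup M] [Module R M] [AddCommGroup N] [Module R N]

theorem ker_eq_span_sub_of_linearIndependent {b : ι → M} {c : κ → N} {g : ι → κ} {f : M →ₗ[R] N}
    (hb : Submodule.span R (Set.range b) = ⊤) (hc : LinearIndependent R c)
    (hf : ∀ i, f (b i) = c (g i)) :
    LinearMap.ker f = Submodule.span R {x | ∃ i j, g i = g j ∧ x = b i - b j} := by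
  set S := Submodule.span R {x | ∃ i j, g i = g j ∧ x = b i - b j} with hS
  apply le_antisymm
  · intro x hx
    rw [LinearMap.mem_ker] at hx
    obtain ⟨l, rfl⟩ : x ∈ LinearMap.range (Finsupp.linearCombination R b) := by
      rw [Finsupp.range_linearCombination, hb]
      trivial
    have mapDomain_eq_zero : Finsupp.mapDomain g l = 0 := by
      refine linearIndependent_iff.mp hc _ ?_
      have comp_eq : c ∘ g = f ∘ b := funext fun i ↦ (hf i).symm
      rw [Finsupp.linearCombination_mapDomain, comp_eq, ← Finsupp.apply_linearCombination, hx]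
    have mkQ_factorsThrough : (S.mkQ ∘ b).FactorsThrough g := fun i j hij ↦
      (Submodule.Quotient.eq S).mpr (Submodule.subset_span ⟨i, j, hij, rfl⟩)
    rw [← S.ker_mkQ, LinearMap.mem_ker, Finsupp.apply_linearCombination,
      ← mkQ_factorsThrough.extend_comp (0 : κ → M ⧸ S), ← Finsupp.linearCombination_mapDomain,
      mapDomain_eq_zero, map_zero]
  · rw [hS, Submodule.span_le]
    rintro _ ⟨i, j, hij, rfl⟩
    simp [hf, hij]

end LinearAlgebra

section Monomials

variable {σ τ M R : Type*} [CommSemiring R] [AddCommMonoid M]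

theorem prod_X_pow_eq_monomial_equivFunOnFinite_symm [Fintype σ] (u : σ → ℕ) :
    ∏ i, X i ^ u i = monomial (Finsupp.equivFunOnFinite.symm u) (1 : R) := by
  rw [prod_X_pow]
  congr 2 with i
  exact Finsupp.indicator_of_mem (Finset.mem_univ i) _

theorem linearCombination_equivFunOnFinite_symm_apply [Fintype σ] [Finite τ] (A : σ → τ → ℕ)
    (u : σ → ℕ) (j : τ) :
    Finsupp.linearCombination ℕ (fun i ↦ Finsupp.equivFunOnFinite.symm (A i))
      (Finsupp.equivFunOnFinite.symm u) j = ∑ i, u i * A i j := by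
  simp [Finsupp.linearCombination_apply, Finsupp.sum_fintype]

theorem map_monomial_one_eq_single {a : σ → M} {φ : MvPolynomial σ R →ₐ[R] AddMonoidAlgebra R M}
    (hφ : ∀ i, φ (X i) = AddMonoidAlgebra.single (a i) 1) (u : σ →₀ ℕ) :
    φ (monomial u 1) = AddMonoidAlgebra.single (Finsupp.linearCombination ℕ a u) 1 := by
  rw [monomial_eq, C_1, one_mul, map_finsuppProd]
  simp [Finsupp.prod, hφ, Finsupp.linearCombination_apply, Finsupp.sum]

end Monomials

section ToricIdeal

variable {σ τ M R : Type*} [CommRing R] [AddCommMonoid M]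

variable (R) in
/-- The binomials `x ^ u - x ^ v` with `∑ uᵢ aᵢ = ∑ vᵢ aᵢ`, which span the toric ideal of the
family `a`. The `aᵢ` may lie in any commutative monoid, written additively, and there may be
infinitely many variables. -/
def toricBinomials (a : σ → M) : Set (MvPolynomial σ R) :=
  {p | ∃ u v : σ →₀ ℕ, Finsupp.linearCombination ℕ a u = Finsupp.linearCombination ℕ a v ∧
    p = monomial u 1 - monomial v 1}

theorem toricBinomials_eq_setOf_prod_sub_prod [Fintype σ] [Finite τ] (A : σ → τ → ℕ) :
    toricBinomials R (fun i ↦ Finsupp.equivFunOnFinite.symm (A i)) =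
      {p | ∃ u v : σ → ℕ, (∀ j, ∑ i, u i * A i j = ∑ i, v i * A i j) ∧
        p = (∏ i, X i ^ u i) - ∏ i, X i ^ v i} := by
  simp only [toricBinomials, Finsupp.equivFunOnFinite.exists_congr_left, Finsupp.ext_iff,
    linearCombination_equivFunOnFinite_symm_apply, prod_X_pow_eq_monomial_equivFunOnFinite_symm]

theorem ker_monomialMap_eq_span_binomials_general (a : σ → M)
    (φ : MvPolynomial σ R →ₐ[R] AddMonoidAlgebra R M)
    (hφ : ∀ i, φ (X i) = AddMonoidAlgebra.single (a i) 1) :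
    Submodule.span R (toricBinomials R a) = Submodule.restrictScalars R (RingHom.ker φ) := by
  have map_basis (u : σ →₀ ℕ) : φ.toLinearMap (basisMonomials σ R u) =
      AddMonoidAlgebra.basis M R (Finsupp.linearCombination ℕ a u) := by
    simpa using map_monomial_one_eq_single hφ u
  exact (ker_eq_span_sub_of_linearIndependent (basisMonomials σ R).span_eq
    (AddMonoidAlgebra.basis M R).linearIndependent map_basis).symm

end ToricIdeal

/-- The toric ideal `I_A = ker φ` is spanned as a `k`-vector space by the binomials
`x^u - x^v` with `∑ i, u i • A i = ∑ i, v i • A i`. -/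
theorem ker_monomialMap_eq_span_binomials
    (k : Type*) [Field k] (n D : ℕ) (hn : 0 < n) (hD : 0 < D)
    (A : Fin n → Fin D → ℕ)
    (φ : MvPolynomial (Fin n) k →ₐ[k] MvPolynomial (Fin D) k)
    (hφ : ∀ i, φ (X i) = ∏ j, X j ^ A i j) :
    Submodule.span k
        {p : MvPolynomial (Fin n) k |
          ∃ u v : Fin n → ℕ,
            (∀ j, ∑ i, u i * A i j = ∑ i, v i * A i j) ∧
            p = (∏ i, X i ^ u i) - ∏ i, X i ^ v i} =
      Submodule.restrictScalars k (RingHom.ker φ) := by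
  rw [← toricBinomials_eq_setOf_prod_sub_prod]
  exact ker_monomialMap_eq_span_binomials_general _ φ fun i ↦
    (hφ i).trans (prod_X_pow_eq_monomial_equivFunOnFinite_symm (A i))
end

section
/- Let k be a field, n and D positive integers, and A an n-by-D family of vectors a_1, ..., a_n in ℕ^D. Let φ : k[x_1, ..., x_n] → k[t_1, ..., t_D] be the k-algebra homomorphism determined by φ(x_i) = t^{a_i}. Then the kernel of φ, i.e. the toric ideal I_A, equals the ideal of k[x_1, ..., x_n] generated by the set of binomials { x^u − x^v : u, v ∈ ℕ^n with Σ_i u_i a_i = Σ_i v_i a_i }. -/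
/-!
Modulo the binomials `x^u - x^v` with `A u = A v`, a monomial `x^u` depends only on `A u`. The
quotient map therefore factors through `u ↦ A u` on monomials. Since distinct monomials `t^a` are
linearly independent, the coefficients of an element of `ker φ` sum to zero over each fibre of
`u ↦ A u`, so the element vanishes in the quotient.
-/

open MvPolynomial

section Basis

variable {R M P ι κ : Type*}

theorem apply_eq_linearCombination_mapDomain_repr [Semiring R] [AddCommMonoid M] [Module R M]
    [AddCommMonoid P] [Module R P] (b : Module.Basis ι R M) {f : ι → κ} {c : κ → P}
    {l : M →ₗ[R] P} (hl : ∀ i, l (b i) = c (f i)) (x : M) :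
    l x = Finsupp.linearCombination R c ((b.repr x).mapDomain f) := by
  have hcomp : l = Finsupp.linearCombination R c ∘ₗ Finsupp.lmapDomain R R f ∘ₗ b.repr :=
    b.ext fun i => by simp [hl]
  exact LinearMap.congr_fun hcomp x

theorem ker_eq_span_basis_sub_basis [Ring R] [AddCommGroup M] [Module R M]
    [AddCommGroup P] [Module R P] (b : Module.Basis ι R M) {f : ι → κ} {c : κ → P}
    (hc : LinearIndependent R c) {l : M →ₗ[R] P} (hl : ∀ i, l (b i) = c (f i)) :
    l.ker = Submodule.span R {x | ∃ i j, f i = f j ∧ x = b i - b j} := by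
  apply le_antisymm
  · intro x hx
    set S := Submodule.span R {x | ∃ i j, f i = f j ∧ x = b i - b j}
    have hmap : (b.repr x).mapDomain f = 0 := hc <| by
      rw [← apply_eq_linearCombination_mapDomain_repr b hl, LinearMap.mem_ker.mp hx, map_zero]
    have hfactor : (S.mkQ ∘ b).FactorsThrough f := fun i j hij =>
      (Submodule.Quotient.eq S).mpr (Submodule.subset_span ⟨i, j, hij, rfl⟩)
    have hmkQ : ∀ i, S.mkQ (b i) = Function.extend f (S.mkQ ∘ b) 0 (f i) := fun i =>
      (hfactor.extend_apply 0 i).symm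
    rw [← S.ker_mkQ, LinearMap.mem_ker, apply_eq_linearCombination_mapDomain_repr b hmkQ, hmap,
      map_zero]
  · rw [Submodule.span_le]
    rintro _ ⟨i, j, hij, rfl⟩
    rw [SetLike.mem_coe, LinearMap.mem_ker, map_sub, hl, hl, hij, sub_self]

theorem ringHom_ker_eq_ideal_span_basis_sub_basis {B S : Type*} [CommRing R] [Ring B] [Algebra R B]
    [Ring S] [Algebra R S] (b : Module.Basis ι R B) {f : ι → κ} {c : κ → S}
    (hc : LinearIndependent R c) {φ : B →ₐ[R] S} (hφ : ∀ i, φ (b i) = c (f i)) :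
    RingHom.ker φ = Ideal.span {x | ∃ i j, f i = f j ∧ x = b i - b j} := by
  have hker := ker_eq_span_basis_sub_basis b hc (l := φ.toLinearMap) hφ
  apply le_antisymm
  · intro x (hx : x ∈ φ.toLinearMap.ker)
    rw [hker] at hx
    exact Submodule.span_subset_span R B _ hx
  · rw [Ideal.span_le]
    intro x hx
    exact hker.ge (Submodule.subset_span hx)

end Basis

section Monomial

variable {R σ τ : Type*}

theorem monomial_one_eq_prod_X_pow [CommSemiring R] [Fintype σ] (u : σ →₀ ℕ) :
    monomial u (1 : R) = ∏ i, X i ^ u i := by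
  rw [monomial_eq, C_1, one_mul, Finsupp.prod_fintype _ _ fun _ => pow_zero _]

theorem map_monomial_one_of_map_X [CommSemiring R] {A : σ → τ →₀ ℕ}
    {φ : MvPolynomial σ R →ₐ[R] MvPolynomial τ R} (hφ : ∀ i, φ (X i) = monomial (A i) 1)
    (u : σ →₀ ℕ) : φ (monomial u 1) = monomial (Finsupp.linearCombination ℕ A u) 1 := by
  simp only [monomial_eq (s := u), C_1, one_mul, map_finsuppProd, map_pow, hφ, monomial_pow,
    one_pow, Finsupp.linearCombination_apply, monomial_finsupp_sum_index]

theorem setOf_prod_X_pow_sub_prod_X_pow_eq [CommRing R] [Fintype σ] [Finite τ] (A : σ → τ → ℕ) :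
    {p : MvPolynomial σ R | ∃ u v : σ → ℕ,
      (∀ j, ∑ i, u i * A i j = ∑ i, v i * A i j) ∧ p = (∏ i, X i ^ u i) - ∏ i, X i ^ v i} =
    {p | ∃ u v : σ →₀ ℕ,
      Finsupp.linearCombination ℕ (fun i => Finsupp.equivFunOnFinite.symm (A i)) u =
        Finsupp.linearCombination ℕ (fun i => Finsupp.equivFunOnFinite.symm (A i)) v ∧
      p = monomial u 1 - monomial v 1} := by
  ext p
  simp [Finsupp.equivFunOnFinite.symm.surjective.exists, monomial_one_eq_prod_X_pow,
    Finsupp.linearCombination_apply, Finsupp.sum_fintype, Finsupp.ext_iff]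

theorem ker_monomialMap_eq_ideal_span_binomials_general [CommRing R] (A : σ → τ →₀ ℕ)
    (φ : MvPolynomial σ R →ₐ[R] MvPolynomial τ R) (hφ : ∀ i, φ (X i) = monomial (A i) 1) :
    RingHom.ker φ =
      Ideal.span {p | ∃ u v : σ →₀ ℕ,
        Finsupp.linearCombination ℕ A u = Finsupp.linearCombination ℕ A v ∧
        p = monomial u 1 - monomial v 1} := by
  simpa only [coe_basisMonomials] using
    ringHom_ker_eq_ideal_span_basis_sub_basis (basisMonomials σ R)
      (basisMonomials τ R).linearIndependent (f := Finsupp.linearCombination ℕ A) (φ := φ)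
      (by simpa only [coe_basisMonomials] using map_monomial_one_of_map_X hφ)

end Monomial

/-- The toric ideal `I_A = ker φ` equals the ideal generated by the binomials
`x^u - x^v` with `∑ i, u i • A i = ∑ i, v i • A i`. -/
theorem ker_monomialMap_eq_ideal_span_binomials
    (k : Type*) [Field k] (n D : ℕ) (hn : 0 < n) (hD : 0 < D)
    (A : Fin n → Fin D → ℕ)
    (φ : MvPolynomial (Fin n) k →ₐ[k] MvPolynomial (Fin D) k)
    (hφ : ∀ i, φ (X i) = ∏ j, X j ^ A i j) :
    RingHom.ker φ =
      Ideal.span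
        {p : MvPolynomial (Fin n) k |
          ∃ u v : Fin n → ℕ,
            (∀ j, ∑ i, u i * A i j = ∑ i, v i * A i j) ∧
            p = (∏ i, X i ^ u i) - ∏ i, X i ^ v i} := by
  rw [setOf_prod_X_pow_sub_prod_X_pow_eq]
  exact ker_monomialMap_eq_ideal_span_binomials_general _ φ fun i => by
    rw [hφ, monomial_one_eq_prod_X_pow, Finsupp.coe_equivFunOnFinite_symm]
end

section
/- Let k be a field, n and D positive integers, and a_1, ..., a_n vectors in ℕ^D. Then the family of monomials t^{a_1}, ..., t^{a_n} in k[t_1, ..., t_D] is algebraically independent over k if and only if the family of vectors a_1, ..., a_n is linearly independent over ℚ (equivalently, the integer matrix A with columns a_1, ..., a_n has rank n). -/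
open MvPolynomial

/-! Substituting `X i ↦ t ^ a i` sends the monomial `X ^ m` to `t ^ (∑ i, m i • a i)`. It is
therefore the map of monoid algebras induced by `m ↦ ∑ i, m i • a i`, and it is injective iff this
map of exponents is, that is, iff the `a i` are linearly independent over the semiring `ℕ`.
Splitting integer coefficients into positive and negative parts turns independence over `ℕ` into
independence over `ℤ`, and clearing denominators identifies the latter with independence
over `ℚ`. -/

theorem linearIndependent_int_iff_nat {ι G : Type*} [AddCommGroup G] {v : ι → G} :
    LinearIndependent ℤ v ↔ LinearIndependent ℕ v := by
  refine ⟨fun h ↦ h.restrict_scalars' ℕ, fun h ↦ linearIndependent_iff'.2 fun s g hg i hi ↦ ?_⟩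
  have sum_posPart_eq_sum_negPart :
      ∑ i ∈ s, (g i).toNat • v i = ∑ i ∈ s, (-g i).toNat • v i := by
    rw [← sub_eq_zero, ← Finset.sum_sub_distrib, ← hg]
    refine Finset.sum_congr rfl fun i _ ↦ ?_
    rw [← natCast_zsmul, ← natCast_zsmul, ← sub_smul, Int.toNat_sub_toNat_neg]
  have posPart_eq_negPart := linearIndependent_iff'ₛ.1 h s _ _ sum_posPart_eq_sum_negPart i hi
  omega

theorem linearIndependent_rat_natCast_iff_nat {ι σ : Type*} {v : ι → σ → ℕ} :
    LinearIndependent ℚ (fun i j ↦ (v i j : ℚ)) ↔ LinearIndependent ℕ v := by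
  let natCast : (σ → ℕ) →ₗ[ℕ] (σ → ℚ) := ((Nat.castAddMonoidHom ℚ).compLeft σ).toNatLinearMap
  have natCast_injective : Function.Injective natCast :=
    (Nat.cast_injective (R := ℚ)).comp_left
  calc LinearIndependent ℚ (natCast ∘ v)
    _ ↔ LinearIndependent ℤ (natCast ∘ v) := (LinearIndependent.iff_fractionRing ℤ ℚ).symm
    _ ↔ LinearIndependent ℕ (natCast ∘ v) := linearIndependent_int_iff_nat
    _ ↔ LinearIndependent ℕ v := natCast.linearIndependent_iff_of_injOn natCast_injective.injOn

section AddMonoidAlgebra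

variable {R ι M N : Type*}

theorem addMonoidAlgebra_mapDomain_injective_iff [Semiring R] [Nontrivial R] {f : M → N} :
    Function.Injective (AddMonoidAlgebra.mapDomain (R := R) f) ↔ Function.Injective f := by
  refine ⟨fun h m m' hm ↦ ?_, AddMonoidAlgebra.mapDomain_injective⟩
  have : AddMonoidAlgebra.single m (1 : R) = AddMonoidAlgebra.single m' 1 :=
    h (by simp only [AddMonoidAlgebra.mapDomain_single, hm])
  exact AddMonoidAlgebra.single_left_injective one_ne_zero this

theorem aeval_single_one_eq_mapDomainAlgHom [CommSemiring R] [AddCommMonoid M] (v : ι → M) :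
    aeval (fun i ↦ AddMonoidAlgebra.single (v i) (1 : R)) =
      AddMonoidAlgebra.mapDomainAlgHom R R
        (Finsupp.linearCombination ℕ v).toAddMonoidHom := by
  refine algHom_ext fun i ↦ ?_
  rw [aeval_X, X, ← single_eq_monomial]
  simp

theorem algebraicIndependent_single_one_iff_linearIndependent_nat [CommRing R] [Nontrivial R]
    [AddCommMonoid M] {v : ι → M} :
    AlgebraicIndependent R (fun i ↦ AddMonoidAlgebra.single (v i) (1 : R)) ↔
      LinearIndependent ℕ v := by
  rw [AlgebraicIndependent, aeval_single_one_eq_mapDomainAlgHom]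
  exact addMonoidAlgebra_mapDomain_injective_iff

end AddMonoidAlgebra

theorem algebraicIndependent_monomials_iff_linearIndependent_general
    (R : Type*) [CommRing R] [Nontrivial R] {ι σ : Type*} (a : ι → σ →₀ ℕ) :
    AlgebraicIndependent R (fun i ↦ monomial (a i) (1 : R)) ↔
      LinearIndependent ℚ (fun i j ↦ (a i j : ℚ)) :=
  calc AlgebraicIndependent R (fun i ↦ monomial (a i) (1 : R))
    _ ↔ LinearIndependent ℕ a := algebraicIndependent_single_one_iff_linearIndependent_nat
    _ ↔ LinearIndependent ℕ (Finsupp.lcoeFun ∘ a) :=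
      (Finsupp.lcoeFun.linearIndependent_iff_of_injOn DFunLike.coe_injective.injOn).symm
    _ ↔ LinearIndependent ℚ (fun i j ↦ (a i j : ℚ)) := linearIndependent_rat_natCast_iff_nat.symm

/-- The monomials `t ^ (a 1), ..., t ^ (a n)` are algebraically independent over `k`
iff the exponent vectors `a 1, ..., a n` are linearly independent over `ℚ`. -/
theorem algebraicIndependent_monomials_iff_linearIndependent
    (k : Type*) [Field k] (n D : ℕ) (hn : 0 < n) (hD : 0 < D)
    (a : Fin n → Fin D → ℕ) :
    AlgebraicIndependent k
        (fun i : Fin n => ∏ j, (X j : MvPolynomial (Fin D) k) ^ a i j) ↔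
      LinearIndependent ℚ (fun i : Fin n => fun j : Fin D => (a i j : ℚ)) := by
  simpa [prod_X_pow] using algebraicIndependent_monomials_iff_linearIndependent_general k
    fun i ↦ Finsupp.indicator Finset.univ fun j _ ↦ a i j
end

section
/- Let k be a field, n and D positive integers, and A an integer matrix with columns a_1, ..., a_n ∈ ℕ^D of rank d (over ℚ). Let φ : k[x_1, ..., x_n] → k[t_1, ..., t_D] be the k-algebra homomorphism determined by φ(x_i) = t^{a_i}, and let I_A = ker φ be the toric ideal of A. Then the Krull dimension of the quotient ring k[x_1, ..., x_n]/I_A equals d, the rank of A. -/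
open MvPolynomial

/-! Noether normalization identifies the Krull dimension of a finitely generated domain over a
field with its transcendence degree. Distinct monomials are linearly independent over the ground
field, so a family of monomials is algebraically independent exactly when no two different products
of its members coincide, that is, when the exponent vectors are linearly independent over `ℕ`;
clearing denominators and separating positive from negative coefficients, this is the same as
linear independence over `ℚ`. The algebraic matroid of the monomials is thus the linear matroid of
the exponent vectors, and the two ranks agree. -/

section KrullDimension

theorem ringKrullDim_le_of_isIntegral (R S : Type*) [CommRing R] [CommRing S] [Algebra R S]
    [Algebra.IsIntegral R S] : ringKrullDim S ≤ ringKrullDim R :=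
  Order.krullDim_le_of_strictMono (PrimeSpectrum.comap (algebraMap R S)) fun _ _ h ↦
    Ideal.IsIntegral.comap_lt_comap (R := R) h

theorem ringKrullDim_eq_of_isIntegral (R S : Type*) [CommRing R] [CommRing S] [Algebra R S]
    [Algebra.IsIntegral R S] [FaithfulSMul R S] : ringKrullDim S = ringKrullDim R := by
  refine (ringKrullDim_le_of_isIntegral R S).antisymm (iSup_le fun chain ↦ ?_)
  obtain ⟨P, hP⟩ := Algebra.IsIntegral.comap_surjective R S chain.head
  have : P.asIdeal.LiesOver chain.head.asIdeal := ⟨congrArg PrimeSpectrum.asIdeal hP.symm⟩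
  obtain ⟨lift, hlength, -⟩ := Ideal.exists_ltSeries_of_hasGoingUp (S := S) chain P.asIdeal
  exact hlength ▸ Order.LTSeries.length_le_krullDim lift

theorem ringKrullDim_eq_toENat_trdeg (k A : Type*) [Field k] [CommRing A] [IsDomain A]
    [Algebra k A] [Algebra.FiniteType k A] :
    ringKrullDim A = (Algebra.trdeg k A).toENat := by
  obtain ⟨s, g, hinj, hint⟩ := exists_integral_inj_algHom_of_fg k A
  algebraize [g.toRingHom]
  have : Algebra.IsIntegral (MvPolynomial (Fin s) k) A := ⟨hint⟩
  have : FaithfulSMul (MvPolynomial (Fin s) k) A :=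
    (faithfulSMul_iff_algebraMap_injective _ _).mpr hinj
  have hdim : ringKrullDim A = s := by
    simp [ringKrullDim_eq_of_isIntegral (MvPolynomial (Fin s) k) A]
  have htrdeg : Algebra.trdeg k A = s := by
    simpa [trdeg_eq_zero (R := MvPolynomial (Fin s) k) (A := A)] using
      (lift_trdeg_add_eq k (MvPolynomial (Fin s) k) A).symm
  simp [hdim, htrdeg]

end KrullDimension

section Independence

theorem linearIndependent_nat_iff_int {ι V : Type*} [AddCommGroup V] {v : ι → V} :
    LinearIndependent ℕ v ↔ LinearIndependent ℤ v := by
  refine ⟨fun h ↦ ?_, fun h ↦ h.restrict_scalars' ℕ⟩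
  have hcast (u : ι →₀ ℕ) : Finsupp.linearCombination ℤ v (u.mapRange (↑) Nat.cast_zero) =
      Finsupp.linearCombination ℕ v u := by
    simp [Finsupp.linearCombination_apply, Finsupp.sum_mapRange_index]
  rw [linearIndependent_iff]
  intro l hl
  let pos : ι →₀ ℕ := l.mapRange Int.toNat Int.toNat_zero
  let neg : ι →₀ ℕ := (-l).mapRange Int.toNat Int.toNat_zero
  have hsub : pos.mapRange (↑) Nat.cast_zero - neg.mapRange (↑) Nat.cast_zero = l := by
    ext i
    exact Int.toNat_sub_toNat_neg (l i)
  have hpos : pos = neg := h <| by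
    rw [← sub_eq_zero, ← hcast, ← hcast, ← map_sub, hsub, hl]
  rw [← hsub, hpos, sub_self]

theorem linearIndependent_nat_iff_rat {ι V : Type*} [AddCommGroup V] [Module ℚ V] {v : ι → V} :
    LinearIndependent ℕ v ↔ LinearIndependent ℚ v :=
  linearIndependent_nat_iff_int.trans (LinearIndependent.iff_fractionRing ℤ ℚ)

theorem aeval_single_eq_mapDomainAlgHom {R ι M : Type*} [CommSemiring R] [AddCommMonoid M]
    (a : ι → M) :
    (aeval fun i ↦ AddMonoidAlgebra.single (a i) (1 : R)) =
      AddMonoidAlgebra.mapDomainAlgHom R R (Finsupp.linearCombination ℕ a).toAddMonoidHom := by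
  refine MvPolynomial.algHom_ext fun i ↦ ?_
  rw [aeval_X, X, monomial]
  simp

theorem algebraicIndependent_single_iff {R ι M : Type*} [CommRing R] [Nontrivial R]
    [AddCommMonoid M] {a : ι → M} :
    AlgebraicIndependent R (fun i ↦ AddMonoidAlgebra.single (a i) (1 : R)) ↔
      LinearIndependent ℕ a := by
  rw [algebraicIndependent_iff_injective_aeval, aeval_single_eq_mapDomainAlgHom]
  refine ⟨fun h u v huv ↦ ?_, AddMonoidAlgebra.mapDomain_injective⟩
  have hsingle : AddMonoidAlgebra.single u (1 : R) = AddMonoidAlgebra.single v 1 := h <| by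
    simpa using congrArg (AddMonoidAlgebra.single · (1 : R)) huv
  exact AddMonoidAlgebra.single_left_injective one_ne_zero hsingle

end Independence

section TranscendenceDegree

theorem isTranscendenceBasis_of_maximal {R A ι : Type*} [CommRing R] [CommRing A] [IsDomain A]
    [Algebra R A] {x : ι → A} [Algebra.IsAlgebraic (Algebra.adjoin R (Set.range x)) A] {s : Set ι}
    (hs : Maximal (AlgebraicIndepOn R x) s) : IsTranscendenceBasis R fun i : s ↦ x i := by
  have := (algebraMap R A).domain_nontrivial
  have hx : ∀ y ∈ Set.range x, IsAlgebraic (Algebra.adjoin R (x '' s)) y := by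
    rintro _ ⟨i, rfl⟩
    by_contra hi
    have his : i ∈ s := hs.mem_of_prop_insert (hs.prop.insert hi)
    exact hi (isAlgebraic_algebraMap
      (⟨x i, Algebra.subset_adjoin ⟨i, his, rfl⟩⟩ : Algebra.adjoin R (x '' s)))
  refine hs.prop.isTranscendenceBasis_iff_isAlgebraic.mpr ⟨fun a ↦ ?_⟩
  rw [← Set.image_eq_range]
  exact (Algebra.IsAlgebraic.isAlgebraic (R := Algebra.adjoin R (Set.range x)) a
    ).adjoin_of_forall_isAlgebraic fun y hy ↦ hx y hy.1

theorem toENat_trdeg_eq_toENat_rank_span {k K A V ι : Type*} [CommRing k] [CommRing A]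
    [IsDomain A] [Algebra k A] [DivisionRing K] [AddCommGroup V] [Module K V] {x : ι → A}
    [Algebra.IsAlgebraic (Algebra.adjoin k (Set.range x)) A] {v : ι → V}
    (h : ∀ s, AlgebraicIndepOn k x s ↔ LinearIndepOn K v s) :
    (Algebra.trdeg k A).toENat =
      (Module.rank K (Submodule.span K (Set.range v))).toENat := by
  obtain ⟨s, -, -, hspan, hs⟩ :=
    exists_linearIndepOn_extension (linearIndepOn_empty K v) (Set.empty_subset Set.univ)
  rw [Set.image_univ] at hspan
  have hmax : Maximal (AlgebraicIndepOn k x) s := by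
    refine (Set.maximal_iff_forall_insert fun _ _ ↦ AlgebraicIndepOn.mono).mpr
      ⟨(h s).mpr hs, fun i hi hins ↦ ?_⟩
    exact ((linearIndepOn_insert hi).mp ((h _).mp hins)).2 (hspan (Set.mem_range_self i))
  have hspan_eq : Submodule.span K (v '' s) = Submodule.span K (Set.range v) :=
    Submodule.span_eq_of_le _ (Set.image_subset_range v s |>.trans Submodule.subset_span)
      (Submodule.span_le.mpr hspan)
  have := (algebraMap k A).domain_nontrivial
  have hcard := congrArg Cardinal.toENat
    (isTranscendenceBasis_of_maximal hmax).lift_cardinalMk_eq_trdeg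
  rw [Cardinal.toENat_lift, Cardinal.toENat_lift] at hcard
  rw [← hcard, ← hspan_eq, toENat_rank_span_set hs, Set.toENat_cardinalMk]

end TranscendenceDegree

section ToricIdeal

theorem adjoin_range_mk_X {R σ : Type*} [CommRing R] (I : Ideal (MvPolynomial σ R)) :
    Algebra.adjoin R (Set.range fun i ↦ Ideal.Quotient.mkₐ R I (X i)) = ⊤ := by
  rw [show (fun i ↦ Ideal.Quotient.mkₐ R I (X i)) = Ideal.Quotient.mkₐ R I ∘ X from rfl,
    Set.range_comp, Algebra.adjoin_image, adjoin_range_X, Algebra.map_top, AlgHom.range_eq_top]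
  exact Ideal.Quotient.mkₐ_surjective R I

theorem algebraicIndependent_single_iff_rat {R ι M V : Type*} [CommRing R] [Nontrivial R]
    [AddCommMonoid M] [AddCommGroup V] [Module ℚ V] {e : M →+ V} (he : Function.Injective e)
    {a : ι → M} :
    AlgebraicIndependent R (fun i ↦ AddMonoidAlgebra.single (a i) (1 : R)) ↔
      LinearIndependent ℚ (e ∘ a) := by
  rw [algebraicIndependent_single_iff, ← linearIndependent_nat_iff_rat]
  exact (e.toNatLinearMap.linearIndependent_iff_of_injOn he.injOn).symm

theorem algebraicIndepOn_mk_X_iff {k σ M V : Type*} [CommRing k] [Nontrivial k]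
    [AddCommMonoid M] [AddCommGroup V] [Module ℚ V] {e : M →+ V} (he : Function.Injective e)
    {a : σ → M} {φ : MvPolynomial σ k →ₐ[k] AddMonoidAlgebra k M}
    (hφ : ∀ i, φ (X i) = AddMonoidAlgebra.single (a i) 1) (s : Set σ) :
    AlgebraicIndepOn k (fun i ↦ Ideal.Quotient.mkₐ k (RingHom.ker φ) (X i)) s ↔
      LinearIndepOn ℚ (e ∘ a) s := by
  have hlift : (Ideal.kerLiftAlg φ ∘ fun i : s ↦ Ideal.Quotient.mkₐ k (RingHom.ker φ) (X i)) =
      fun i : s ↦ AddMonoidAlgebra.single (a i) 1 :=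
    funext fun i ↦ hφ i
  rw [AlgebraicIndepOn, ← (Ideal.kerLiftAlg φ).algebraicIndependent_iff
    (Ideal.kerLiftAlg_injective φ), hlift]
  exact algebraicIndependent_single_iff_rat he

theorem ringKrullDim_quotient_toricIdeal_eq_rank_general {k σ M V : Type*} [Field k] [Finite σ]
    [AddCommMonoid M] [AddCommGroup V] [Module ℚ V] {e : M →+ V} (he : Function.Injective e)
    {a : σ → M} {φ : MvPolynomial σ k →ₐ[k] AddMonoidAlgebra k M}
    (hφ : ∀ i, φ (X i) = AddMonoidAlgebra.single (a i) 1) :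
    ringKrullDim (MvPolynomial σ k ⧸ RingHom.ker φ) =
      Module.finrank ℚ (Submodule.span ℚ (Set.range (e ∘ a))) := by
  have : TwoUniqueSums M := .of_injective_addHom e.toAddHom he inferInstance
  have : IsDomain (AddMonoidAlgebra k M) := NoZeroDivisors.to_isDomain _
  have : (RingHom.ker φ).IsPrime := RingHom.ker_isPrime φ
  have : Algebra.IsAlgebraic
      (Algebra.adjoin k (Set.range fun i ↦ Ideal.Quotient.mkₐ k (RingHom.ker φ) (X i)))
      (MvPolynomial σ k ⧸ RingHom.ker φ) := by
    rw [adjoin_range_mk_X]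
    exact ⟨fun x ↦ isAlgebraic_algebraMap (⟨x, trivial⟩ : (⊤ : Subalgebra k _))⟩
  have := FiniteDimensional.span_of_finite ℚ (Set.finite_range (e ∘ a))
  rw [ringKrullDim_eq_toENat_trdeg k,
    toENat_trdeg_eq_toENat_rank_span (algebraicIndepOn_mk_X_iff he hφ), ← Module.finrank_eq_rank,
    map_natCast]
  rfl

/-- The embedding of the exponent monoid `ℕ^σ` of `k[t_j : j ∈ σ]` into the rational vector space
`ℚ^σ`; exponents are finitely supported functions, as in `MvPolynomial`. -/
def exponentEmbedding (σ : Type*) : (σ →₀ ℕ) →+ (σ → ℚ) where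
  toFun u j := u j
  map_zero' := by ext; simp
  map_add' u v := by ext; simp

theorem exponentEmbedding_injective (σ : Type*) : Function.Injective (exponentEmbedding σ) :=
  fun _ _ h ↦ Finsupp.ext fun j ↦ Nat.cast_injective (congrFun h j)

theorem prod_X_pow_eq_single {R σ : Type*} [CommSemiring R] [Fintype σ] (u : σ → ℕ) :
    ∏ j, (X j : MvPolynomial σ R) ^ u j =
      AddMonoidAlgebra.single (Finsupp.equivFunOnFinite.symm u) 1 := by
  change _ = monomial _ 1
  rw [monomial_eq, Finsupp.prod_fintype _ _ (by simp)]
  simp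

end ToricIdeal

/-- The Krull dimension of the coordinate ring `k[x]/I_A` of the toric ideal `I_A = ker φ`
equals the rank `d` of the defining matrix `A` over `ℚ`. -/
theorem ringKrullDim_quotient_toricIdeal_eq_rank
    (k : Type*) [Field k] (n D : ℕ) (hn : 0 < n) (hD : 0 < D)
    (A : Fin n → Fin D → ℕ) (d : ℕ)
    (hd : (Matrix.of fun j i => (A i j : ℚ) : Matrix (Fin D) (Fin n) ℚ).rank = d)
    (φ : MvPolynomial (Fin n) k →ₐ[k] MvPolynomial (Fin D) k)
    (hφ : ∀ i, φ (X i) = ∏ j, X j ^ A i j) :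
    ringKrullDim (MvPolynomial (Fin n) k ⧸ RingHom.ker φ) = d := by
  rw [← hd, Matrix.rank_eq_finrank_span_cols]
  exact ringKrullDim_quotient_toricIdeal_eq_rank_general (exponentEmbedding_injective (Fin D))
    (a := fun i ↦ Finsupp.equivFunOnFinite.symm (A i))
    fun i ↦ (hφ i).trans (prod_X_pow_eq_single (A i))
end
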